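/- arXiv:0801.4571 — 2 statements merged into one kernel-verified Lean document; each statement's English description precedes it below -/
import Mathlib

section
/- Consider the 3-COL CSP of a graph G = (Δ, Ξ). Let PTP messages (λ^PTP, ρ^PTP, μ^PTP) evolve by the 3-COL PTP update and SDBP messages (λ^SDBP, ρ*^SDBP, μ^SDBP) evolve by the 3-COL SDBP update, with all messages nonnegative and all normalizing sums (including the SDBP normalizing constants δ) nonzero throughout. If at some iteration ρ^{norm,PTP}_{c→v}(T) = ρ*^{SDBP}_{c→v}(T) for every pair (v-c) and every token T, then at all subsequent iterations, for every pair (v-c), all distinct colors i,j, every token T, and every v ∈ V: λ^{PTP}_{v→c}({i}) = λ^{SDBP}_{v→c}({i},{1,2,3}); λ^{PTP}_{v→c}({i,j}) = λ^{SDBP}_{v→c}({i,j},{1,2,3}); λ^{PTP}_{v→c}({1,2,3}) = λ^{SDBP}_{v→c}({1,2,3},{1,2,3}); ρ^{norm,PTP}_{c→v}(T) = ρ*^{SDBP}_{c→v}(T); and μ^{PTP}_v(T) = μ^{SDBP}_v(T). -/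
/-!
The left messages and summaries of both algorithms are the same polynomials in the right
messages, so they agree as soon as `ρ^norm` (PTP) and `ρ*` (SDBP) agree; it remains to propagate
that agreement through one iteration.  With `L` the normalizing sum of the PTP left message, the
PTP right message is obtained from the left message by regrouping its entries and dividing by `L`,
hence it already sums to `1` and its normalization changes nothing.  The SDBP right message has
the same regrouped entries multiplied by `δ`, and its normalization forces `δ * L = 1`
(`nrm_right_eq`).
-/

open Finset

/-- A token: a nonempty subset of the three-color alphabet `χ = {1,2,3}`
(modelled as `Fin 3`). -/
abbrev Tok3 := {s : Finset (Fin 3) // s.Nonempty}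

/-- The singleton token `{i}`. -/
def sTok (i : Fin 3) : Tok3 := ⟨{i}, Finset.singleton_nonempty i⟩
/-- The two-element token `{i,j}`. -/
def pTok (i j : Fin 3) : Tok3 := ⟨{i, j}, Finset.insert_nonempty i {j}⟩
/-- The token `{1,2,3}`. -/
def uTok : Tok3 := ⟨Finset.univ, Finset.univ_nonempty⟩

/-- The normalizing sum of a message: `Σ_T m(T)` over the seven tokens. -/
def tokSum (m : Tok3 → ℝ) : ℝ := ∑ t : Tok3, m t

/-- The normalization `m^norm = m / (Σ_T m(T))` of a message. -/
noncomputable def nrm (m : Tok3 → ℝ) : Tok3 → ℝ := fun t => m t / tokSum m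

lemma tok3_cases (T : Tok3) : T = sTok 0 ∨ T = sTok 1 ∨ T = sTok 2 ∨
    T = pTok 0 1 ∨ T = pTok 0 2 ∨ T = pTok 1 2 ∨ T = uTok := by
  revert T; decide

lemma tokSum_eq (m : Tok3 → ℝ) : tokSum m = m (sTok 0) + m (sTok 1) + m (sTok 2) +
    m (pTok 0 1) + m (pTok 0 2) + m (pTok 1 2) + m uTok := by
  have h : (Finset.univ : Finset Tok3) =
      {sTok 0, sTok 1, sTok 2, pTok 0 1, pTok 0 2, pTok 1 2, uTok} := by decide
  rw [tokSum, h]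
  repeat rw [Finset.sum_insert (by decide)]
  rw [Finset.sum_singleton]
  ring

/-- Two messages agree once they agree on `{i}`, `{i,j}` and `{1,2,3}` for all distinct colors. -/
lemma tok3_ext {f g : Tok3 → ℝ}
    (h : ∀ i j k : Fin 3, i ≠ j → i ≠ k → j ≠ k →
      f (sTok i) = g (sTok i) ∧ f (pTok i j) = g (pTok i j) ∧ f uTok = g uTok) (T : Tok3) :
    f T = g T := by
  have h0 := h 0 1 2 (by decide) (by decide) (by decide)
  have h1 := h 1 2 0 (by decide) (by decide) (by decide)
  have h2 := h 2 0 1 (by decide) (by decide) (by decide)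
  have h3 := h 0 2 1 (by decide) (by decide) (by decide)
  rcases tok3_cases T with rfl | rfl | rfl | rfl | rfl | rfl | rfl
  exacts [h0.1, h1.1, h2.1, h0.2.1, h3.2.1, h1.2.1, h0.2.2]

/-- The right update on one edge: `l` is the (common) left message, `r` the PTP right message
computed from it, and `s` the SDBP right message with normalizing constant `d`. -/
lemma nrm_right_eq {l r s : Tok3 → ℝ} {d : ℝ}
    (hr : ∀ i j k : Fin 3, i ≠ j → i ≠ k → j ≠ k →
      r (pTok i j) = nrm l (sTok k) ∧
      r uTok = nrm l (pTok i j) + nrm l (pTok i k) + nrm l (pTok j k) + nrm l uTok ∧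
      r (sTok i) = 0)
    (hs : ∀ i j k : Fin 3, i ≠ j → i ≠ k → j ≠ k →
      s (pTok i j) = d * l (sTok k) ∧
      s uTok = d * (l (pTok 0 1) + l (pTok 0 2) + l (pTok 1 2) + l uTok) ∧
      s (sTok i) = 0 ∧
      s (pTok 0 1) + s (pTok 0 2) + s (pTok 1 2) + s uTok = 1) (T : Tok3) :
    nrm r T = s T := by
  obtain ⟨r01, ru, r0⟩ := hr 0 1 2 (by decide) (by decide) (by decide)
  obtain ⟨r12, -, r1⟩ := hr 1 2 0 (by decide) (by decide) (by decide)
  obtain ⟨r02, -, -⟩ := hr 0 2 1 (by decide) (by decide) (by decide)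
  obtain ⟨-, -, r2⟩ := hr 2 0 1 (by decide) (by decide) (by decide)
  obtain ⟨s01, su, -, hsum⟩ := hs 0 1 2 (by decide) (by decide) (by decide)
  obtain ⟨s12, -⟩ := hs 1 2 0 (by decide) (by decide) (by decide)
  obtain ⟨s02, -⟩ := hs 0 2 1 (by decide) (by decide) (by decide)
  have hL := tokSum_eq l
  have hd : d * tokSum l = 1 := by
    rw [hL, ← hsum, s01, s02, s12, su]; ring
  have hd' : d = (tokSum l)⁻¹ := eq_inv_of_mul_eq_one_left hd
  have hrs : ∀ T, r T = s T := tok3_ext fun i j k hij hik hjk => by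
    obtain ⟨a, -, c⟩ := hr i j k hij hik hjk
    obtain ⟨a', -, c', -⟩ := hs i j k hij hik hjk
    refine ⟨by rw [c, c'], ?_, ?_⟩
    · rw [a, a', hd', nrm]; ring
    · rw [ru, su, hd']; simp only [nrm]; ring
  have hR : tokSum r = 1 := by
    rw [tokSum_eq, r0, r1, r2, ← hsum]; simp only [hrs]; ring
  rw [nrm, hR, div_one, hrs]

/-- Consider the 3-COL CSP of a graph `G`.  Let PTP messages
`(lamP, ρP, μP)` evolve by the 3-COL PTP update and SDBP messages `(lamS, ρS, μS)`
evolve by the 3-COL SDBP update (with normalizing constants `δ`), all messages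
nonnegative and all normalizing sums (including `δ`) nonzero throughout.  If at some
iteration `n₀` the normalized PTP right messages coincide with the state-decoupled
SDBP right messages, then at all subsequent iterations the left, right, and summary
messages of the two algorithms coincide as stated. -/
theorem stmt14 {Δ : Type} [Fintype Δ] [DecidableEq Δ]
    (G : SimpleGraph Δ) [DecidableRel G.Adj]
    (hdeg : ∀ v : Δ, 2 ≤ (G.neighborFinset v).card)
    (lamP ρP : ℕ → Δ → Δ → Tok3 → ℝ) (μP : ℕ → Δ → Tok3 → ℝ)
    (lamS : ℕ → Δ → Δ → Tok3 → Tok3 → ℝ) (ρS : ℕ → Δ → Δ → Tok3 → ℝ)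
    (μS : ℕ → Δ → Tok3 → ℝ) (δ : ℕ → Δ → Δ → ℝ)
    -- the 3-COL PTP left update
    (hlamP : ∀ (n : ℕ) (v u : Δ), G.Adj v u → ∀ i j k : Fin 3, i ≠ j → i ≠ k → j ≠ k →
      lamP (n + 1) v u (sTok i) =
        (∏ w ∈ (G.neighborFinset v).erase u,
            (nrm (ρP n v w) (pTok i j) + nrm (ρP n v w) (pTok i k) +
              nrm (ρP n v w) uTok)) -
          (∏ w ∈ (G.neighborFinset v).erase u,
            (nrm (ρP n v w) (pTok i j) + nrm (ρP n v w) uTok)) -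
          (∏ w ∈ (G.neighborFinset v).erase u,
            (nrm (ρP n v w) (pTok i k) + nrm (ρP n v w) uTok)) +
          ∏ w ∈ (G.neighborFinset v).erase u, nrm (ρP n v w) uTok ∧
      lamP (n + 1) v u (pTok i j) =
        (∏ w ∈ (G.neighborFinset v).erase u,
            (nrm (ρP n v w) (pTok i j) + nrm (ρP n v w) uTok)) -
          ∏ w ∈ (G.neighborFinset v).erase u, nrm (ρP n v w) uTok ∧
      lamP (n + 1) v u uTok = ∏ w ∈ (G.neighborFinset v).erase u, nrm (ρP n v w) uTok)
    -- the 3-COL PTP right update (`u` the other endpoint of the edge)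
    (hρP : ∀ (n : ℕ) (v u : Δ), G.Adj v u → ∀ i j k : Fin 3, i ≠ j → i ≠ k → j ≠ k →
      ρP (n + 1) v u (pTok i j) = nrm (lamP (n + 1) u v) (sTok k) ∧
      ρP (n + 1) v u uTok =
        nrm (lamP (n + 1) u v) (pTok i j) + nrm (lamP (n + 1) u v) (pTok i k) +
          nrm (lamP (n + 1) u v) (pTok j k) + nrm (lamP (n + 1) u v) uTok ∧
      ρP (n + 1) v u (sTok i) = 0)
    -- the 3-COL PTP summary update
    (hμP : ∀ (n : ℕ) (v : Δ), ∀ i j k : Fin 3, i ≠ j → i ≠ k → j ≠ k →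
      μP n v (sTok i) =
        (∏ w ∈ G.neighborFinset v,
            (nrm (ρP n v w) (pTok i j) + nrm (ρP n v w) (pTok i k) +
              nrm (ρP n v w) uTok)) -
          (∏ w ∈ G.neighborFinset v, (nrm (ρP n v w) (pTok i j) + nrm (ρP n v w) uTok)) -
          (∏ w ∈ G.neighborFinset v, (nrm (ρP n v w) (pTok i k) + nrm (ρP n v w) uTok)) +
          ∏ w ∈ G.neighborFinset v, nrm (ρP n v w) uTok ∧
      μP n v (pTok i j) =
        (∏ w ∈ G.neighborFinset v, (nrm (ρP n v w) (pTok i j) + nrm (ρP n v w) uTok)) -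
          ∏ w ∈ G.neighborFinset v, nrm (ρP n v w) uTok ∧
      μP n v uTok = ∏ w ∈ G.neighborFinset v, nrm (ρP n v w) uTok)
    -- the 3-COL SDBP left update
    (hlamS : ∀ (n : ℕ) (v u : Δ), G.Adj v u → ∀ i j k : Fin 3, i ≠ j → i ≠ k → j ≠ k →
      lamS (n + 1) v u (sTok i) (pTok i j) =
        (∏ w ∈ (G.neighborFinset v).erase u,
            (ρS n v w (pTok i j) + ρS n v w (pTok i k) + ρS n v w uTok)) -
          ∏ w ∈ (G.neighborFinset v).erase u, (ρS n v w (pTok i j) + ρS n v w uTok) ∧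
      lamS (n + 1) v u (sTok i) uTok =
        (∏ w ∈ (G.neighborFinset v).erase u,
            (ρS n v w (pTok i j) + ρS n v w (pTok i k) + ρS n v w uTok)) -
          (∏ w ∈ (G.neighborFinset v).erase u, (ρS n v w (pTok i j) + ρS n v w uTok)) -
          (∏ w ∈ (G.neighborFinset v).erase u, (ρS n v w (pTok i k) + ρS n v w uTok)) +
          ∏ w ∈ (G.neighborFinset v).erase u, ρS n v w uTok ∧
      lamS (n + 1) v u (pTok i j) (pTok i j) =
        ∏ w ∈ (G.neighborFinset v).erase u, (ρS n v w (pTok i j) + ρS n v w uTok) ∧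
      lamS (n + 1) v u (pTok i j) uTok =
        (∏ w ∈ (G.neighborFinset v).erase u, (ρS n v w (pTok i j) + ρS n v w uTok)) -
          ∏ w ∈ (G.neighborFinset v).erase u, ρS n v w uTok ∧
      lamS (n + 1) v u uTok uTok = ∏ w ∈ (G.neighborFinset v).erase u, ρS n v w uTok)
    -- the 3-COL SDBP right update (`u` the other endpoint of the edge)
    (hρS : ∀ (n : ℕ) (v u : Δ), G.Adj v u → ∀ i j k : Fin 3, i ≠ j → i ≠ k → j ≠ k →
      ρS (n + 1) v u (pTok i j) = δ (n + 1) v u * lamS (n + 1) u v (sTok k) uTok ∧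
      ρS (n + 1) v u uTok =
        δ (n + 1) v u *
          (lamS (n + 1) u v (pTok 0 1) uTok + lamS (n + 1) u v (pTok 0 2) uTok +
            lamS (n + 1) u v (pTok 1 2) uTok + lamS (n + 1) u v uTok uTok) ∧
      ρS (n + 1) v u (sTok i) = 0 ∧
      ρS (n + 1) v u (pTok 0 1) + ρS (n + 1) v u (pTok 0 2) +
          ρS (n + 1) v u (pTok 1 2) + ρS (n + 1) v u uTok = 1)
    -- the 3-COL SDBP summary update
    (hμS : ∀ (n : ℕ) (v : Δ), ∀ i j k : Fin 3, i ≠ j → i ≠ k → j ≠ k →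
      μS n v (sTok i) =
        (∏ w ∈ G.neighborFinset v,
            (ρS n v w (pTok i j) + ρS n v w (pTok i k) + ρS n v w uTok)) -
          (∏ w ∈ G.neighborFinset v, (ρS n v w (pTok i j) + ρS n v w uTok)) -
          (∏ w ∈ G.neighborFinset v, (ρS n v w (pTok i k) + ρS n v w uTok)) +
          ∏ w ∈ G.neighborFinset v, ρS n v w uTok ∧
      μS n v (pTok i j) =
        (∏ w ∈ G.neighborFinset v, (ρS n v w (pTok i j) + ρS n v w uTok)) -
          ∏ w ∈ G.neighborFinset v, ρS n v w uTok ∧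
      μS n v uTok = ∏ w ∈ G.neighborFinset v, ρS n v w uTok)
    -- nonnegativity of all messages
    (hnn : ∀ (n : ℕ) (v u : Δ), G.Adj v u → ∀ t t' : Tok3,
      0 ≤ lamP n v u t ∧ 0 ≤ ρP n v u t ∧ 0 ≤ ρS n v u t ∧ 0 ≤ lamS n v u t t')
    -- all normalizing sums (including `δ`) nonzero
    (hnz : ∀ (n : ℕ) (v u : Δ), G.Adj v u →
      tokSum (lamP n v u) ≠ 0 ∧ tokSum (ρP n v u) ≠ 0 ∧ δ n v u ≠ 0)
    -- the correspondence at some iteration `n₀`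
    (n₀ : ℕ)
    (hcorr : ∀ v u : Δ, G.Adj v u → ∀ T : Tok3, nrm (ρP n₀ v u) T = ρS n₀ v u T) :
    ∀ n : ℕ, n₀ ≤ n →
      (∀ v u : Δ, G.Adj v u →
        (∀ i j k : Fin 3, i ≠ j → i ≠ k → j ≠ k →
          lamP (n + 1) v u (sTok i) = lamS (n + 1) v u (sTok i) uTok ∧
          lamP (n + 1) v u (pTok i j) = lamS (n + 1) v u (pTok i j) uTok ∧
          lamP (n + 1) v u uTok = lamS (n + 1) v u uTok uTok) ∧
        ∀ T : Tok3, nrm (ρP n v u) T = ρS n v u T) ∧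
      ∀ v : Δ, ∀ T : Tok3, μP n v T = μS n v T := by
  have left : ∀ n, (∀ v u : Δ, G.Adj v u → ∀ T : Tok3, nrm (ρP n v u) T = ρS n v u T) →
      ∀ v u : Δ, G.Adj v u → ∀ i j k : Fin 3, i ≠ j → i ≠ k → j ≠ k →
        lamP (n + 1) v u (sTok i) = lamS (n + 1) v u (sTok i) uTok ∧
        lamP (n + 1) v u (pTok i j) = lamS (n + 1) v u (pTok i j) uTok ∧
        lamP (n + 1) v u uTok = lamS (n + 1) v u uTok uTok := by
    intro n h v u huv i j k hij hik hjk
    have e : ∀ w ∈ (G.neighborFinset v).erase u, ∀ T, nrm (ρP n v w) T = ρS n v w T :=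
      fun w hw => h v w ((G.mem_neighborFinset v w).1 (Finset.mem_of_mem_erase hw))
    obtain ⟨a, b, c⟩ := hlamP n v u huv i j k hij hik hjk
    obtain ⟨-, a', -, b', c'⟩ := hlamS n v u huv i j k hij hik hjk
    rw [a, b, c, a', b', c']
    have e' (F : (Tok3 → ℝ) → ℝ) : ∏ w ∈ (G.neighborFinset v).erase u, F (nrm (ρP n v w)) =
        ∏ w ∈ (G.neighborFinset v).erase u, F (ρS n v w) :=
      Finset.prod_congr rfl fun w hw => by rw [funext (e w hw)]
    rw [e' fun m => m (pTok i j) + m (pTok i k) + m uTok, e' fun m => m (pTok i j) + m uTok,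
      e' fun m => m (pTok i k) + m uTok, e' fun m => m uTok]
    exact ⟨rfl, rfl, rfl⟩
  have right : ∀ n, n₀ ≤ n → ∀ v u : Δ, G.Adj v u → ∀ T : Tok3,
      nrm (ρP n v u) T = ρS n v u T := by
    intro n hn
    induction n, hn using Nat.le_induction with
    | base => exact hcorr
    | succ n hn ih =>
      intro v u huv
      have hl : ∀ T, lamP (n + 1) u v T = lamS (n + 1) u v T uTok :=
        tok3_ext (left n ih u v huv.symm)
      refine nrm_right_eq (hρP n v u huv)
        (d := δ (n + 1) v u) ?_
      simp only [hl]
      exact hρS n v u huv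
  intro n hn
  refine ⟨fun v u huv => ⟨left n (right n hn) v u huv, right n hn v u huv⟩, fun v => ?_⟩
  refine tok3_ext fun i j k hij hik hjk => ?_
  have e : ∀ w ∈ G.neighborFinset v, ∀ T, nrm (ρP n v w) T = ρS n v w T :=
    fun w hw => right n hn v w ((G.mem_neighborFinset v w).1 hw)
  obtain ⟨a, b, c⟩ := hμP n v i j k hij hik hjk
  obtain ⟨a', b', c'⟩ := hμS n v i j k hij hik hjk
  rw [a, b, c, a', b', c']
  have e' (F : (Tok3 → ℝ) → ℝ) : ∏ w ∈ G.neighborFinset v, F (nrm (ρP n v w)) =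
      ∏ w ∈ G.neighborFinset v, F (ρS n v w) :=
    Finset.prod_congr rfl fun w hw => by rw [funext (e w hw)]
  rw [e' fun m => m (pTok i j) + m (pTok i k) + m uTok, e' fun m => m (pTok i j) + m uTok,
    e' fun m => m (pTok i k) + m uTok, e' fun m => m uTok]
  exact ⟨rfl, rfl, rfl⟩
end

section
/- Let a CSP be given in which every constraint Γ_c (c ∈ C) is locally compatible, and let (ω_v)_{v∈V} be obedience conditionals. For each pair (u-b) let ρ_{b→u} be a real-valued function on tokens on u with ρ_{b→u}(t) = 0 whenever t ∉ 𝓕_b(u). Then for every pair (v-c) and every token T on v, the SDBP right-message expression — the sum over rectangles (s^L_u)_{u∈V(c)∖{v}} of tokens with F_c^v((s^L_u)_u) = T of ∏_{u∈V(c)∖{v}} [ Σ over families (s^R_b)_{b∈C(u)∖{c}} of tokens of ω_u(s^L_u | (⋂_{b∈C(u)∖{c}} s^R_b) ∩ F_c^u(r_u)) · ∏_{b∈C(u)∖{c}} ρ_{b→u}(s^R_b) ], where r_u is the rectangle on V(c)∖{u} with v-component T and w-component s^L_w for w ∈ V(c)∖{u,v} — equals the weighted-PTP right-message expression, namely the same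 sum with ω_u(s^L_u | ⋂_{b∈C(u)∖{c}} s^R_b) in place of ω_u(s^L_u | (⋂_{b∈C(u)∖{c}} s^R_b) ∩ F_c^u(r_u)). -/
/-!
The two expressions agree term by term. Fix a rectangle `sL` with `F_c^v(sL) = T`, a
coordinate `u` and a family `sR`. If some `sR b` is not forceable by `Γ_b`, the factor
`ρ_{b→u}(sR b)` vanishes and both terms are zero. Otherwise `⋂_b sR b ⊆ A_{∼c}(u)`
(`inf_subset_Asim`), and local compatibility gives `A_{∼c}(u) ⊆ F_c^u(r_u)`
(`Asim_subset_forced`), so that intersecting with `F_c^u(r_u)` changes nothing.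
-/

open Finset

variable {V C χ : Type} [Fintype V] [DecidableEq V] [Fintype C] [DecidableEq C]
  [Fintype χ] [DecidableEq χ]

/-- A token: a nonempty subset of the alphabet `χ`. -/
abbrev Token (χ : Type) := {s : Finset χ // s.Nonempty}

/-- `C(v)`. -/
def Cv (Vc : C → Finset V) (v : V) : Finset C := univ.filter fun c => v ∈ Vc c

/-- The forced token `F_c^v(t)`. -/
def forced (Γ : C → Finset (V → χ)) (Vc : C → Finset V) (c : C) (v : V)
    (t : V → Finset χ) : Finset χ :=
  univ.filter fun a => ∃ x ∈ Γ c, x v = a ∧ ∀ u ∈ Vc c, u ≠ v → x u ∈ t u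

/-- `𝓕_c(v)`: the set of tokens on `v` forceable by `Γ_c`, i.e. the nonempty sets of
the form `F_c^v(t)` for a rectangle `t` of tokens on `V(c)∖{v}`. -/
def Fset (Γ : C → Finset (V → χ)) (Vc : C → Finset V) (c : C) (v : V) :
    Finset (Finset χ) :=
  ((univ : Finset (V → Token χ)).image fun t =>
      forced Γ Vc c v fun u => (t u).val).filter fun T => T.Nonempty

/-- `A_c(v) := ⋃_{T ∈ 𝓕_c(v)} T`. -/
def Aset (Γ : C → Finset (V → χ)) (Vc : C → Finset V) (c : C) (v : V) : Finset χ :=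
  (Fset Γ Vc c v).sup id

/-- `A_{∼c}(u) := ⋂_{b ∈ C(u)∖{c}} A_b(u)`. -/
def Asim (Γ : C → Finset (V → χ)) (Vc : C → Finset V) (c : C) (u : V) : Finset χ :=
  ((Cv Vc u).erase c).inf fun b => Aset Γ Vc b u

/-- Constraint `Γ_c` is locally compatible: for every `v ∈ V(c)`, every forceable token
`T ∈ 𝓕_c(v)`, every rectangle `t'` of tokens with `F_c^v(t') = T`, and every
`u ∈ V(c)∖{v}`, one has `A_{∼c}(u) ⊆ F_c^u(r)` where `r` has `v`-component `T` and
`w`-component `t'_w` for `w ∈ V(c)∖{u,v}`. -/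
def LocallyCompatible (Γ : C → Finset (V → χ)) (Vc : C → Finset V) (c : C) : Prop :=
  ∀ v ∈ Vc c, ∀ T ∈ Fset Γ Vc c v, ∀ t' : V → Token χ,
    forced Γ Vc c v (fun u => (t' u).val) = T →
      ∀ u ∈ (Vc c).erase v,
        Asim Γ Vc c u ⊆
          forced Γ Vc c u fun w => if w = v then T else (t' w).val

/-- The forced token only depends on the rectangle's components on `V(c)∖{v}`. -/
theorem forced_congr (Γ : C → Finset (V → χ)) (Vc : C → Finset V) (c : C) (v : V)
    {s t : V → Finset χ} (h : ∀ u ∈ Vc c, u ≠ v → s u = t u) :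
    forced Γ Vc c v s = forced Γ Vc c v t := by
  ext a
  simp only [forced, mem_filter, mem_univ, true_and]
  refine exists_congr fun x => and_congr_right fun _ => and_congr_right fun _ =>
    forall_congr' fun u => forall_congr' fun hu => forall_congr' fun huv => ?_
  rw [h u hu huv]

/-- An intersection of tokens forceable by the constraints `b ∈ C(u)∖{c}` is contained in
`A_{∼c}(u)`, since each of them is contained in the corresponding `A_b(u)`. -/
theorem inf_subset_Asim (Γ : C → Finset (V → χ)) (Vc : C → Finset V) (c : C) (u : V)
    (sR : {b // b ∈ (Cv Vc u).erase c} → Token χ)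
    (h : ∀ b, (sR b).val ∈ Fset Γ Vc b.val u) :
    (univ.inf fun b => (sR b).val) ⊆ Asim Γ Vc c u := by
  refine Finset.le_inf (f := fun b => Aset Γ Vc b u) fun b hb => ?_
  calc (univ.inf fun b => (sR b).val)
      ≤ (sR ⟨b, hb⟩).val := Finset.inf_le (f := fun b => (sR b).val) (mem_univ _)
    _ ≤ Aset Γ Vc b u := Finset.le_sup (f := id) (h ⟨b, hb⟩)

/-- Local compatibility for a rectangle of tokens `sL` given only on `V(c)∖{v}`. -/
theorem Asim_subset_forced (Γ : C → Finset (V → χ)) (Vc : C → Finset V) (c : C)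
    (hlc : LocallyCompatible Γ Vc c) (v : V) (hv : v ∈ Vc c) (T : Token χ)
    (sL : {u // u ∈ (Vc c).erase v} → Token χ)
    (hsL : forced Γ Vc c v
      (fun w => if h : w ∈ (Vc c).erase v then (sL ⟨w, h⟩).val else ∅) = T.val)
    (u : V) (hu : u ∈ (Vc c).erase v) :
    Asim Γ Vc c u ⊆ forced Γ Vc c u
      (fun w => if w = v then T.val
        else if h : w ∈ (Vc c).erase v then (sL ⟨w, h⟩).val else ∅) := by
  -- Extend `sL` to all of `V` by a token; the value `T` off `V(c)∖{v}` is irrelevant.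
  let t' : V → Token χ := fun w => if h : w ∈ (Vc c).erase v then sL ⟨w, h⟩ else T
  have ht' : ∀ w ∈ Vc c, w ≠ v →
      (t' w).val = if h : w ∈ (Vc c).erase v then (sL ⟨w, h⟩).val else ∅ := by
    intro w hw hwv
    have hmem : w ∈ (Vc c).erase v := mem_erase.2 ⟨hwv, hw⟩
    simp only [t', dif_pos hmem]
  have hforced : forced Γ Vc c v (fun w => (t' w).val) = T.val :=
    (forced_congr Γ Vc c v ht').trans hsL
  have hT : T.val ∈ Fset Γ Vc c v :=
    mem_filter.2 ⟨mem_image.2 ⟨t', mem_univ _, hforced⟩, T.property⟩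
  refine (hlc v hv T.val hT t' hforced u hu).trans (forced_congr Γ Vc c u ?_).subset
  intro w hw _
  by_cases hwv : w = v
  · simp only [if_pos hwv]
  · simp only [if_neg hwv, ht' w hw hwv]

/-- Let every constraint of the CSP be locally compatible, let
`(ω_v)` be obedience conditionals, and let the right messages `ρ_{b→u}` vanish on
tokens not forceable by `Γ_b`.  Then for every pair `(v-c)` and every token `T` on
`v`, the SDBP right-message expression equals the weighted-PTP right-message
expression. -/
theorem stmt16 (Γ : C → Finset (V → χ)) (Vc : C → Finset V)
    (hVc : ∀ c : C, 2 ≤ (Vc c).card)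
    (hCv : ∀ v : V, 2 ≤ (Cv Vc v).card)
    (hlc : ∀ c : C, LocallyCompatible Γ Vc c)
    (ω : V → Token χ → Finset χ → ℝ)
    (hω_nonneg : ∀ (v : V) (a : Token χ) (b : Finset χ), 0 ≤ ω v a b)
    (hω_empty : ∀ (v : V) (a : Token χ), ω v a ∅ = 0)
    (hω_sub : ∀ (v : V) (a : Token χ) (b : Finset χ), ¬ a.val ⊆ b → ω v a b = 0)
    (ρ : C → V → Token χ → ℝ)
    (hρ : ∀ (b : C) (u : V) (t : Token χ), t.val ∉ Fset Γ Vc b u → ρ b u t = 0) :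
    ∀ v : V, ∀ c ∈ Cv Vc v, ∀ T : Token χ,
      -- the SDBP right-message expression
      (∑ sL ∈ univ.filter (fun sL : {u // u ∈ (Vc c).erase v} → Token χ =>
          forced Γ Vc c v
            (fun w => if h : w ∈ (Vc c).erase v then (sL ⟨w, h⟩).val else ∅) = T.val),
        ∏ u : {u // u ∈ (Vc c).erase v},
          ∑ sR : {b // b ∈ (Cv Vc u.val).erase c} → Token χ,
            ω u.val (sL u)
              (((univ.inf fun b : {b // b ∈ (Cv Vc u.val).erase c} => (sR b).val)) ∩
                forced Γ Vc c u.val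
                  (fun w => if w = v then T.val
                    else if h : w ∈ (Vc c).erase v then (sL ⟨w, h⟩).val else ∅)) *
              ∏ b : {b // b ∈ (Cv Vc u.val).erase c}, ρ b.val u.val (sR b)) =
      -- the weighted-PTP right-message expression
      (∑ sL ∈ univ.filter (fun sL : {u // u ∈ (Vc c).erase v} → Token χ =>
          forced Γ Vc c v
            (fun w => if h : w ∈ (Vc c).erase v then (sL ⟨w, h⟩).val else ∅) = T.val),
        ∏ u : {u // u ∈ (Vc c).erase v},
          ∑ sR : {b // b ∈ (Cv Vc u.val).erase c} → Token χ,
            ω u.val (sL u)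
              (univ.inf fun b : {b // b ∈ (Cv Vc u.val).erase c} => (sR b).val) *
              ∏ b : {b // b ∈ (Cv Vc u.val).erase c}, ρ b.val u.val (sR b)) := by
  intro v c hc T
  have hv : v ∈ Vc c := (mem_filter.1 hc).2
  refine sum_congr rfl fun sL hsL => prod_congr rfl fun u _ => sum_congr rfl fun sR _ => ?_
  by_cases h : ∀ b, (sR b).val ∈ Fset Γ Vc b.val u.val
  · rw [inter_eq_left.2 ((inf_subset_Asim Γ Vc c u.val sR h).trans
      (Asim_subset_forced Γ Vc c (hlc c) v hv T sL (mem_filter.1 hsL).2 u.val u.property))]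
  · obtain ⟨b, hb⟩ := not_forall.1 h
    rw [prod_eq_zero (mem_univ b) (hρ b.val u.val (sR b) hb), mul_zero, mul_zero]
end
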